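/- arXiv:2107.04845 — 3 statements merged into one kernel-verified Lean document; each statement's English description precedes it below -/
import Mathlib

section
/- Let m, n ≥ 1 and let (X₁,…,Xₘ,A) and (Y₁,…,Yₙ,B) be two independent random vectors (with X := (X₁,…,Xₘ) taking values in ℝᵐ, Y := (Y₁,…,Yₙ) in ℝⁿ, and A, B real-valued), where each Xᵢ and each Yⱼ is nondegenerate. Suppose that for all a, a' ∈ ℝᵐ and b, b' ∈ ℝⁿ with ‖a‖² + ‖b‖² = ‖a'‖² + ‖b'‖², the random variables ⟨a,X⟩ + ⟨b,Y⟩ + A + B and ⟨a',X⟩ + ⟨b',Y⟩ + A + B have the same distribution. Then the random variables X₁,…,Xₘ,Y₁,…,Yₙ are mutually independent and all have the same centered normal (Gaussian) distribution. -/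
open MeasureTheory ProbabilityTheory
open scoped NNReal BigOperators

/-- Solution of the functional equation. -/
lemma funeq (f : ℝ → ℝ) (hf : Continuous f) (h0 : f 0 = 1) (hle : ∀ x, f x ≤ 1)
    (hmul : ∀ x y, f x * f y = f (√(x ^ 2 + y ^ 2))) :
    ∃ v : ℝ≥0, ∀ x, f x = Real.exp (-(v * x ^ 2 / 2)) := by
  have habs : ∀ x, f x = f |x| := fun x => by
    have := hmul x 0
    simpa [h0, Real.sqrt_sq_eq_abs] using this
  have hsq : ∀ x, f (x / √2) ^ 2 = f x := fun x => by
    rw [habs x, pow_two, hmul, ← Real.sqrt_sq_eq_abs]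
    congr 2
    rw [div_pow, Real.sq_sqrt (by norm_num)]; ring
  have hne : ∀ x, f x ≠ 0 := by
    intro x hx
    have h1 : ∀ n : ℕ, f (x * (1 / √2) ^ n) = 0 := by
      intro n
      induction n with
      | zero => simpa using hx
      | succ k ih =>
        have := hsq (x * (1 / √2) ^ k)
        rw [ih] at this
        have h2 := pow_eq_zero_iff (two_ne_zero) |>.1 this
        rw [← h2]; congr 1; rw [pow_succ]; ring
    have h3 : Filter.Tendsto (fun n : ℕ => x * (1 / √2) ^ n) Filter.atTop (nhds (x * 0)) := by
      apply Filter.Tendsto.const_mul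
      apply tendsto_pow_atTop_nhds_zero_of_lt_one (by positivity)
      rw [div_lt_one (by positivity)]
      exact Real.lt_sqrt_of_sq_lt (by norm_num)
    have h4 := (hf.tendsto (x * 0)).comp h3
    have h5 : (f ∘ fun n : ℕ => x * (1 / √2) ^ n) = fun _ => 0 := funext h1
    rw [h5, mul_zero, h0] at h4
    exact zero_ne_one (tendsto_nhds_unique tendsto_const_nhds h4)
  have hpos : ∀ x, 0 < f x := fun x => lt_of_le_of_ne (by rw [← hsq]; positivity) (hne x).symm
  set l : ℝ → ℝ := fun u => Real.log (f (√u)) with hl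
  have hlc : Continuous l := (hf.comp Real.continuous_sqrt).log (fun x => hne _)
  have hladd : ∀ u v, 0 ≤ u → 0 ≤ v → l (u + v) = l u + l v := by
    intro u v hu hv
    simp only [hl]
    rw [← Real.log_mul (hne _) (hne _), hmul, Real.sq_sqrt hu, Real.sq_sqrt hv]
  have hl0 : l 0 = 0 := by simp [hl, h0]
  let L : ℝ →+ ℝ := 
    { toFun := fun u => l (max u 0) - l (max (-u) 0)
      map_zero' := by simp
      map_add' := by
        intro u v
        have e : max (u + v) 0 + (max (-u) 0 + max (-v) 0) =
            max (-(u + v)) 0 + (max u 0 + max v 0) := by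
          have key : ∀ w : ℝ, max w 0 - max (-w) 0 = w := by
            intro w
            rcases le_total 0 w with h | h
            · rw [max_eq_left h, max_eq_right (by linarith)]; ring
            · rw [max_eq_right h, max_eq_left (by linarith)]; ring
          linarith [key (u + v), key u, key v]
        have e2 := congrArg l e
        rw [hladd _ _ (by positivity) (by positivity), hladd _ _ (by positivity) (by positivity),
          hladd _ _ (by positivity) (by positivity), hladd _ _ (by positivity) (by positivity)] at e2
        linarith }
  have hLc : Continuous L := by
    change Continuous (fun u => l (max u 0) - l (max (-u) 0))
    fun_prop
  have hlin : ∀ u, 0 ≤ u → l u = u * l 1 := by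
    intro u hu
    have h := map_real_smul L hLc u 1
    simp only [smul_eq_mul, mul_one] at h
    have hh : ∀ w, 0 ≤ w → L w = l w := by
      intro w hw
      change l (max w 0) - l (max (-w) 0) = l w
      rw [max_eq_left hw, max_eq_right (by linarith), hl0, sub_zero]
    rwa [hh u hu, hh 1 zero_le_one] at h
  have hl1 : l 1 ≤ 0 := Real.log_nonpos (hpos _).le (hle _)
  refine ⟨⟨-2 * l 1, by linarith⟩, fun x => ?_⟩
  have h := hlin (x ^ 2) (sq_nonneg x)
  simp only [hl, Real.sqrt_sq_eq_abs, ← habs] at h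
  rw [← Real.exp_log (hpos x), h]
  congr 1
  change _ = -((-2 * l 1) * x ^ 2 / 2)
  simp only [hl]
  ring

section
variable {Ω K : Type*} [MeasurableSpace Ω] [Fintype K]

/-- Joint characteristic function. -/
noncomputable def psi (P : Measure Ω) (Z : K → Ω → ℝ) (c : K → ℝ) : ℂ :=
  ∫ ω, Complex.exp ((∑ k, c k * Z k ω : ℝ) * Complex.I) ∂P

lemma psi_single [DecidableEq K] (P : Measure Ω) (Z : K → Ω → ℝ) (hZ : ∀ k, Measurable (Z k))
    (k : K) (x : ℝ) : psi P Z (Pi.single k x) = charFun (P.map (Z k)) x := by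
  rw [charFun_apply_real, integral_map (hZ k).aemeasurable (by fun_prop)]
  unfold psi
  congr 1; ext ω
  rw [Finset.sum_eq_single k (by intro b _ hb; simp [hb]) (by simp)]
  simp

lemma psi_eq_charFun (P : Measure Ω) (Z : K → Ω → ℝ) (hZ : ∀ k, Measurable (Z k))
    (c : EuclideanSpace ℝ K) : 
    charFun (P.map fun ω => WithLp.toLp 2 (fun k => Z k ω)) c = psi P Z c := by
  rw [charFun_apply, integral_map (by fun_prop) (by fun_prop)]
  unfold psi
  congr 1

lemma psi_inv (P : Measure Ω) [IsProbabilityMeasure P] (Z : K → Ω → ℝ)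
    (hZ : ∀ k, Measurable (Z k)) (A : Ω → ℝ) (hA : Measurable A)
    (h : ∀ c c' : K → ℝ, ∑ k, c k ^ 2 = ∑ k, c' k ^ 2 →
      P.map (fun ω => ∑ k, c k * Z k ω + A ω) = P.map (fun ω => ∑ k, c' k * Z k ω + A ω))
    (c c' : K → ℝ) (hc : ∑ k, c k ^ 2 = ∑ k, c' k ^ 2) : psi P Z c = psi P Z c' := by
  have hcf : ∀ (c : K → ℝ) (t : ℝ), t ≠ 0 →
      charFun (P.map (fun ω => ∑ k, (c k / t) * Z k ω + A ω)) t =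
      ∫ ω, Complex.exp ((∑ k, c k * Z k ω + t * A ω : ℝ) * Complex.I) ∂P := by
    intro c t ht
    rw [charFun_apply_real, integral_map (by fun_prop) (by fun_prop)]
    congr 1; ext ω
    rw [← Complex.ofReal_mul, mul_add, Finset.mul_sum]
    congr 5; ext k; field_simp
  have hlim : ∀ c : K → ℝ, Filter.Tendsto
      (fun t : ℝ => ∫ ω, Complex.exp ((∑ k, c k * Z k ω + t * A ω : ℝ) * Complex.I) ∂P)
      (nhdsWithin 0 {0}ᶜ) (nhds (psi P Z c)) := by
    intro c
    have : Continuous 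
        (fun t : ℝ => ∫ ω, Complex.exp ((∑ k, c k * Z k ω + t * A ω : ℝ) * Complex.I) ∂P) := by
      apply continuous_of_dominated (bound := fun _ => 1)
      · intro t; apply Measurable.aestronglyMeasurable; fun_prop
      · intro t; filter_upwards with ω; rw [Complex.norm_exp_ofReal_mul_I]
      · simp
      · filter_upwards with ω; fun_prop
    have h2 := this.tendsto 0
    simp only [zero_mul, add_zero] at h2
    exact h2.mono_left nhdsWithin_le_nhds
  refine tendsto_nhds_unique (hlim c) ((hlim c').congr' ?_)
  filter_upwards [self_mem_nhdsWithin] with t ht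
  rw [← hcf c t ht, ← hcf c' t ht, h (fun k => c k / t) (fun k => c' k / t)]
  simp only [div_pow, ← Finset.sum_div, hc]

lemma gaussian_of_psi (P : Measure Ω) [IsProbabilityMeasure P] (Z : K → Ω → ℝ)
    (hZ : ∀ k, Measurable (Z k)) (v : ℝ≥0)
    (h : ∀ c, psi P Z c = Complex.exp (-(v * (∑ k, (c k : ℂ) ^ 2) / 2))) :
    iIndepFun Z P ∧ ∀ k, P.map (Z k) = gaussianReal 0 v := by
  classical
  have hg : ∀ k, P.map (Z k) = gaussianReal 0 v := by
    intro k
    have : IsProbabilityMeasure (P.map (Z k)) := Measure.isProbabilityMeasure_map (hZ k).aemeasurable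
    apply Measure.ext_of_charFun
    ext x
    rw [← psi_single P Z hZ, h, charFun_gaussianReal,
      Finset.sum_eq_single k (by intro b _ hb; simp [hb]) (by simp)]
    simp
  refine ⟨?_, hg⟩
  rw [iIndepFun_iff_charFun_pi (fun i => (hZ i).aemeasurable)]
  intro t
  rw [psi_eq_charFun P Z hZ, h]
  simp_rw [hg, charFun_gaussianReal, ← Complex.exp_sum]
  congr 1
  simp [Finset.mul_sum, Finset.sum_div]

end

/-- Generalized Ejsmont characterization: if `(X₁,…,Xₘ,A)` and `(Y₁,…,Yₙ,B)` are independent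
random vectors with each `Xᵢ`, `Yⱼ` nondegenerate, and the distribution of
`⟨a,X⟩ + ⟨b,Y⟩ + A + B` depends only on `‖a‖² + ‖b‖²`, then `X₁,…,Xₘ,Y₁,…,Yₙ` are mutually
independent and all have the same centered normal distribution. -/
theorem ejsmont_characterization
    {Ω : Type*} [MeasurableSpace Ω] (P : Measure Ω) [IsProbabilityMeasure P]
    (m n : ℕ) (hm : 1 ≤ m) (hn : 1 ≤ n)
    (X : Fin m → Ω → ℝ) (Y : Fin n → Ω → ℝ) (A B : Ω → ℝ)
    (hX : ∀ i, Measurable (X i)) (hY : ∀ j, Measurable (Y j))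
    (hA : Measurable A) (hB : Measurable B)
    (hindep : IndepFun (fun ω => ((fun i => X i ω), A ω)) (fun ω => ((fun j => Y j ω), B ω)) P)
    (hXnd : ∀ i, ¬ ∃ c : ℝ, X i =ᵐ[P] fun _ => c)
    (hYnd : ∀ j, ¬ ∃ c : ℝ, Y j =ᵐ[P] fun _ => c)
    (hdist : ∀ (a a' : Fin m → ℝ) (b b' : Fin n → ℝ),
      (∑ i, (a i) ^ 2) + (∑ j, (b j) ^ 2) = (∑ i, (a' i) ^ 2) + (∑ j, (b' j) ^ 2) →
      Measure.map (fun ω => (∑ i, a i * X i ω) + (∑ j, b j * Y j ω) + A ω + B ω) P =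
        Measure.map (fun ω => (∑ i, a' i * X i ω) + (∑ j, b' j * Y j ω) + A ω + B ω) P) :
    ∃ v : ℝ≥0, 0 < v ∧
      iIndepFun (Sum.elim X Y) P ∧
      (∀ i, Measure.map (X i) P = gaussianReal 0 v) ∧
      (∀ j, Measure.map (Y j) P = gaussianReal 0 v) := by
  set Z := Sum.elim X Y with hZdef
  have hZ : ∀ k, Measurable (Z k) := by rintro (i | j); exacts [hX i, hY j]
  have hinv : ∀ c c' : Fin m ⊕ Fin n → ℝ, ∑ k, c k ^ 2 = ∑ k, c' k ^ 2 →
      psi P Z c = psi P Z c' := by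
    refine psi_inv P Z hZ (fun ω => A ω + B ω) (hA.add hB) ?_
    intro c c' hc
    simp only [Fintype.sum_sum_type] at hc
    simpa [Fintype.sum_sum_type, hZdef, add_assoc] using hdist _ _ _ _ hc
  let i0 : Fin m := ⟨0, hm⟩
  let j0 : Fin n := ⟨0, hn⟩
  have hind0 : IndepFun (X i0) (Y j0) P :=
    hindep.comp (φ := fun p : (Fin m → ℝ) × ℝ => p.1 i0)
      (ψ := fun p : (Fin n → ℝ) × ℝ => p.1 j0) (by fun_prop) (by fun_prop)
  set μ := P.map (X i0) with hμ
  have : IsProbabilityMeasure μ := Measure.isProbabilityMeasure_map (hX i0).aemeasurable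
  have hss : ∀ (k : Fin m ⊕ Fin n) (x : ℝ), 
      ∑ l, (Pi.single k x : Fin m ⊕ Fin n → ℝ) l ^ 2 = x ^ 2 := by
    intro k x
    rw [Finset.sum_eq_single k (by intro b _ hb; simp [hb]) (by simp)]
    simp
  have hrad : ∀ (c : Fin m ⊕ Fin n → ℝ) (x : ℝ), ∑ k, c k ^ 2 = x ^ 2 → 
      psi P Z c = charFun μ x := by
    intro c x hc
    rw [hinv c (Pi.single (Sum.inl i0) x) (by rw [hc, hss]), psi_single P Z hZ]
    rfl
  have hYcf : ∀ y, charFun (P.map (Y j0)) y = charFun μ y := by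
    intro y
    rw [← hrad (Pi.single (Sum.inr j0) y) y (hss _ _), psi_single P Z hZ]
    rfl
  have hmulC : ∀ x y, charFun μ x * charFun μ y = charFun μ (√(x ^ 2 + y ^ 2)) := by
    intro x y
    rw [← hYcf y, ← hrad (Sum.elim (Pi.single i0 x) (Pi.single j0 y)) (√(x ^ 2 + y ^ 2))]
    · have e1 := charFun_apply_real (μ := μ) x
      have e2 := charFun_apply_real (μ := P.map (Y j0)) y
      rw [integral_map (hX i0).aemeasurable (by fun_prop)] at e1
      rw [integral_map (hY j0).aemeasurable (by fun_prop)] at e2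
      rw [e1, e2, ← IndepFun.integral_fun_mul_eq_mul_integral]
      · unfold psi
        congr 1; ext ω
        rw [← Complex.exp_add, Fintype.sum_sum_type,
          Finset.sum_eq_single i0 (by intro b _ hb; simp [hb]) (by simp),
          Finset.sum_eq_single j0 (by intro b _ hb; simp [hb]) (by simp)]
        simp [hZdef, add_mul]
      · exact hind0.comp (φ := fun a : ℝ => Complex.exp (x * a * Complex.I))
          (ψ := fun a : ℝ => Complex.exp (y * a * Complex.I)) (by fun_prop) (by fun_prop)
      · have := hX i0
        apply Measurable.aestronglyMeasurable; fun_prop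
      · have := hY j0
        apply Measurable.aestronglyMeasurable; fun_prop
    · rw [Real.sq_sqrt (by positivity), Fintype.sum_sum_type,
          Finset.sum_eq_single i0 (by intro b _ hb; simp [hb]) (by simp),
          Finset.sum_eq_single j0 (by intro b _ hb; simp [hb]) (by simp)]
      simp
  have hreal : ∀ x, charFun μ x = ((charFun μ x).re : ℂ) := by
    intro x
    rw [eq_comm, ← Complex.conj_eq_iff_re, ← charFun_neg,
      ← hrad (Pi.single (Sum.inl i0) x) (-x) (by rw [hss]; ring), 
      hrad (Pi.single (Sum.inl i0) x) x (hss _ _)]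
  obtain ⟨v, hv⟩ := funeq (fun x => (charFun μ x).re) (by
      have := continuous_charFun (μ := μ)
      fun_prop) (by simp) (fun x => (Complex.re_le_norm _).trans (norm_charFun_le_one x)) (by
      intro x y
      rw [← hmulC, hreal x, hreal y, ← Complex.ofReal_mul]; simp)
  have hpsi : ∀ c, psi P Z c = Complex.exp (-(v * (∑ k, (c k : ℂ) ^ 2) / 2)) := by
    intro c
    rw [hrad c (√(∑ k, c k ^ 2)) (by rw [Real.sq_sqrt (by positivity)]), hreal, hv,
      Real.sq_sqrt (by positivity)]
    simp
  obtain ⟨h1, h2⟩ := gaussian_of_psi P Z hZ v hpsi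
  refine ⟨v, ?_, h1, fun i => h2 (Sum.inl i), fun j => h2 (Sum.inr j)⟩
  rw [pos_iff_ne_zero]
  rintro rfl
  apply hXnd i0
  refine ⟨0, ?_⟩
  have h3 : P.map (X i0) = Measure.dirac 0 := by
    have := h2 (Sum.inl i0)
    rwa [gaussianReal_zero_var] at this
  have h4 : ∀ᵐ x ∂(P.map (X i0)), x = 0 := by
    rw [h3, ae_dirac_eq]; simp
  exact ae_of_ae_map (hX i0).aemeasurable h4
end

section
/- Let m, n ≥ 1 and let X = (X₁,…,Xₘ) ∈ ℝᵐ and Y = (Y₁,…,Yₙ) ∈ ℝⁿ be independent random vectors such that each Xᵢ and each Yⱼ is nondegenerate with E(Xᵢ²) = 1 and E(Yⱼ²) = 1. Then the following are equivalent: (i) for all a, a' ∈ ℝᵐ and b, b' ∈ ℝⁿ with ‖a‖² + ‖b‖² = 1 = ‖a'‖² + ‖b'‖², the random variables ⟨a,X⟩ + ⟨b,Y⟩ and ⟨a',X⟩ + ⟨b',Y⟩ have the same distribution; (ii) the random variables X₁,…,Xₘ,Y₁,…,Yₙ are mutually independent and each has the standard normal distribution N(0,1). -/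
open MeasureTheory ProbabilityTheory
open scoped NNReal BigOperators

section Helpers

variable {Ω : Type*} [MeasurableSpace Ω] {P : Measure Ω} [IsProbabilityMeasure P]
  {ι : Type*} [Fintype ι] [DecidableEq ι] {Z : ι → Ω → ℝ}

lemma ej_map_single (i : ι) (s : ℝ) :
    (fun ω => ∑ k, (Pi.single i s : ι → ℝ) k * Z k ω) = fun ω => s * Z i ω := by
  funext ω
  simp [Pi.single_apply, ite_mul]

lemma ej_sq_single (i : ι) (s : ℝ) : ∑ k, ((Pi.single i s : ι → ℝ) k) ^ 2 = s ^ 2 := by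
  simp [Pi.single_apply, ite_pow]

lemma ej_fwd (hZ : ∀ k, Measurable (Z k))
    (H : ∀ c c' : ι → ℝ, ∑ k, c k ^ 2 = 1 → ∑ k, c' k ^ 2 = 1 →
      P.map (fun ω => ∑ k, c k * Z k ω) = P.map (fun ω => ∑ k, c' k * Z k ω))
    {i j : ι} (hij : i ≠ j) (hind : IndepFun (Z i) (Z j) P)
    (h2 : ∫ ω, (Z i ω) ^ 2 ∂P = 1) :
    iIndepFun Z P ∧ ∀ k, P.map (Z k) = gaussianReal 0 1 := by
  have hone : ∀ k, P.map (Z k) = P.map (Z i) := by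
    intro k
    have := H (Pi.single k 1) (Pi.single i 1) (by simp [ej_sq_single]) (by simp [ej_sq_single])
    simpa [ej_map_single] using this
  have hnegm : P.map (fun ω => - Z i ω) = P.map (Z i) := by
    have := H (Pi.single i (-1)) (Pi.single i 1) (by simp [ej_sq_single]) (by simp [ej_sq_single])
    simpa [ej_map_single] using this
  set φ := charFun (P.map (Z i)) with hφ
  have : ∀ k, IsProbabilityMeasure (P.map (Z k)) := fun k =>
    Measure.isProbabilityMeasure_map (hZ k).aemeasurable
  have hφ0 : φ 0 = 1 := by simp [hφ]
  have hφneg : ∀ t, φ (-t) = φ t := by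
    intro t
    have h := charFun_map_mul_comp (μ := P) (hZ i).aemeasurable (-1) t
    simp only [neg_mul, one_mul, hnegm] at h
    exact h.symm
  have hφabs : ∀ t, φ |t| = φ t := by
    intro t
    rcases abs_choice t with h | h <;> rw [h]
    exact hφneg t
  have hS : ∀ c : ι → ℝ, charFun (P.map (fun ω => ∑ k, c k * Z k ω)) 1
      = φ (√(∑ k, c k ^ 2)) := by
    intro c
    set q := ∑ k, c k ^ 2 with hq
    have hq0 : 0 ≤ q := Finset.sum_nonneg fun k _ => sq_nonneg _
    rcases hq0.eq_or_lt with h | h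
    · have hc : ∀ k, c k = 0 := by
        intro k
        have := (Finset.sum_eq_zero_iff_of_nonneg (fun k _ => sq_nonneg (c k))).1 h.symm k
          (Finset.mem_univ k)
        simpa using this
      rw [← h]
      simp [hc, hφ0, Measure.map_const]
    · have hr : 0 < √q := Real.sqrt_pos.2 h
      have e : (fun ω => ∑ k, c k * Z k ω) = fun ω => √q * ∑ k, (c k / √q) * Z k ω := by
        funext ω
        rw [Finset.mul_sum]
        refine Finset.sum_congr rfl fun k _ => ?_
        field_simp
      rw [e, charFun_map_mul_comp (by fun_prop)]
      rw [H (fun k => c k / √q) (Pi.single i 1) ?_ (by simp [ej_sq_single]), ej_map_single]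
      · simp [hφ]
      · simp_rw [div_pow, Real.sq_sqrt hq0]
        rw [← Finset.sum_div, ← hq, div_self h.ne']
  have hadd : ∀ s t, φ s * φ t = φ (√(s ^ 2 + t ^ 2)) := by
    intro s t
    have e := hS (Pi.single i s + Pi.single j t)
    have e1 : (fun ω => ∑ k, (Pi.single i s + Pi.single j t : ι → ℝ) k * Z k ω)
        = fun ω => s * Z i ω + t * Z j ω := by
      funext ω
      simp [Pi.single_apply, add_mul, Finset.sum_add_distrib]
    have e2 : ∑ k, ((Pi.single i s + Pi.single j t : ι → ℝ) k) ^ 2 = s ^ 2 + t ^ 2 := by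
      rw [← ej_sq_single i s, ← ej_sq_single j t, ← Finset.sum_add_distrib]
      refine Finset.sum_congr rfl fun k _ => ?_
      by_cases h1 : k = i
      · subst h1; simp [hij]
      · simp [h1]
    have hi : IndepFun (fun ω => s * Z i ω) (fun ω => t * Z j ω) P :=
      hind.comp (φ := fun x => s * x) (ψ := fun x => t * x) (by fun_prop) (by fun_prop)
    rw [e1, e2, hi.charFun_map_fun_add_eq_mul (by fun_prop) (by fun_prop), Pi.mul_apply,
      charFun_map_mul_comp (by fun_prop), charFun_map_mul_comp (by fun_prop), hone j] at e
    simpa using e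
  have hpow : ∀ (n : ℕ) t, φ t ^ n = φ (√(n * t ^ 2)) := by
    intro n t
    induction n with
    | zero => simp [hφ0]
    | succ n ih =>
      rw [pow_succ, ih, hadd, Real.sq_sqrt (by positivity)]
      congr 2
      push_cast
      ring
  have hmean : P[Z i] = 0 := by
    have h1 : ∫ x, x ∂(P.map (fun ω => - Z i ω)) = ∫ ω, - Z i ω ∂P :=
      integral_map (by fun_prop) (by fun_prop)
    have h3 : ∫ x, x ∂(P.map (Z i)) = ∫ ω, Z i ω ∂P :=
      integral_map (by fun_prop) (by fun_prop)
    rw [hnegm, h3, integral_neg] at h1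
    linarith
  have hφexp : ∀ t : ℝ, φ t = Complex.exp (- t ^ 2 / 2) := by
    intro t
    have hl := tendsto_charFun_inv_sqrt_mul_pow (hZ i).aemeasurable hmean (by simpa using h2) t
    refine tendsto_nhds_unique (Filter.Tendsto.congr' ?_ tendsto_const_nhds) hl
    filter_upwards [Filter.eventually_gt_atTop 0] with n hn
    rw [← hφ, hpow]
    have hn' : (0 : ℝ) < n := by exact_mod_cast hn
    rw [mul_pow, inv_pow, Real.sq_sqrt hn'.le, mul_inv_cancel_left₀ hn'.ne', Real.sqrt_sq_eq_abs,
      hφabs]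
  refine ⟨?_, fun k => ?_⟩
  · rw [iIndepFun_iff_charFun_pi fun k => (hZ k).aemeasurable]
    intro t
    have e := hS (fun k => t k)
    have e1 : charFun (P.map (fun ω => WithLp.toLp 2 (Z · ω))) t
        = charFun (P.map (fun ω => ∑ k, t k * Z k ω)) 1 := by
      rw [charFun_apply, charFun_apply, integral_map (by fun_prop) (by fun_prop),
        integral_map (by fun_prop) (by fun_prop)]
      simp [PiLp.inner_apply]
    rw [e1, e, hφexp]
    simp_rw [hone, ← hφ, hφexp]
    rw [← Complex.exp_sum, ← Complex.ofReal_pow, Real.sq_sqrt (by positivity), ← Finset.sum_div]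
    simp
  · rw [hone k]
    apply Measure.ext_of_charFun
    funext t
    rw [← hφ, hφexp, charFun_gaussianReal]
    simp [neg_div]

lemma ej_bwd (hZ : ∀ k, Measurable (Z k)) (hi : iIndepFun Z P)
    (hg : ∀ k, P.map (Z k) = gaussianReal 0 1) (c : ι → ℝ) (hc : ∑ k, c k ^ 2 = 1) :
    P.map (fun ω => ∑ k, c k * Z k ω) = gaussianReal 0 1 := by
  have : IsProbabilityMeasure (P.map (fun ω => ∑ k, c k * Z k ω)) :=
    Measure.isProbabilityMeasure_map (by fun_prop)
  apply Measure.ext_of_charFun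
  funext t
  have hi' : iIndepFun (fun k ω => c k * Z k ω) P :=
    hi.comp (fun k x => c k * x) (fun k => by fun_prop)
  rw [hi'.charFun_map_fun_sum_eq_prod (fun k => by fun_prop), Finset.prod_apply]
  have e : ∀ k, charFun (P.map (fun ω => c k * Z k ω)) t
      = Complex.exp (((c k ^ 2 : ℝ) : ℂ) * (-(t ^ 2 / 2))) := by
    intro k
    rw [charFun_map_mul_comp (by fun_prop), hg, charFun_gaussianReal]
    congr 1
    push_cast
    simp
    ring
  simp_rw [e]
  rw [← Complex.exp_sum, ← Finset.sum_mul, ← Complex.ofReal_sum, hc, charFun_gaussianReal]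
  simp

end Helpers

/-- For independent random vectors `X ∈ ℝᵐ`, `Y ∈ ℝⁿ` with nondegenerate components of unit
second moment, the distribution of `⟨a,X⟩ + ⟨b,Y⟩` does not depend on `(a,b)` on the unit
sphere `‖a‖² + ‖b‖² = 1` if and only if `X₁,…,Xₘ,Y₁,…,Yₙ` are mutually independent standard
normal random variables. -/
theorem ejsmont_characterization_iff
    {Ω : Type*} [MeasurableSpace Ω] (P : Measure Ω) [IsProbabilityMeasure P]
    (m n : ℕ) (hm : 1 ≤ m) (hn : 1 ≤ n)
    (X : Fin m → Ω → ℝ) (Y : Fin n → Ω → ℝ)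
    (hX : ∀ i, Measurable (X i)) (hY : ∀ j, Measurable (Y j))
    (hindep : IndepFun (fun ω => (fun i => X i ω)) (fun ω => (fun j => Y j ω)) P)
    (hXnd : ∀ i, ¬ ∃ c : ℝ, X i =ᵐ[P] fun _ => c)
    (hYnd : ∀ j, ¬ ∃ c : ℝ, Y j =ᵐ[P] fun _ => c)
    (hX2 : ∀ i, ∫ ω, (X i ω) ^ 2 ∂P = 1)
    (hY2 : ∀ j, ∫ ω, (Y j ω) ^ 2 ∂P = 1) :
    (∀ (a a' : Fin m → ℝ) (b b' : Fin n → ℝ),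
        (∑ i, (a i) ^ 2) + (∑ j, (b j) ^ 2) = 1 →
        (∑ i, (a' i) ^ 2) + (∑ j, (b' j) ^ 2) = 1 →
        Measure.map (fun ω => (∑ i, a i * X i ω) + (∑ j, b j * Y j ω)) P =
          Measure.map (fun ω => (∑ i, a' i * X i ω) + (∑ j, b' j * Y j ω)) P)
      ↔
    (iIndepFun (Sum.elim X Y) P ∧
      (∀ i, Measure.map (X i) P = gaussianReal 0 1) ∧
      (∀ j, Measure.map (Y j) P = gaussianReal 0 1)) := by
  have hZ : ∀ k, Measurable (Sum.elim X Y k) := by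
    rintro (i | j)
    · exact hX i
    · exact hY j
  constructor
  · intro H
    have hind : IndepFun (Sum.elim X Y (Sum.inl ⟨0, hm⟩)) (Sum.elim X Y (Sum.inr ⟨0, hn⟩)) P :=
      hindep.comp (measurable_pi_apply (⟨0, hm⟩ : Fin m)) (measurable_pi_apply (⟨0, hn⟩ : Fin n))
    obtain ⟨h1, h2⟩ := ej_fwd (P := P) (Z := Sum.elim X Y) hZ (by
      intro c c' hc hc'
      rw [Fintype.sum_sum_type] at hc hc'
      simpa [Fintype.sum_sum_type] using
        H (fun i => c (Sum.inl i)) (fun i => c' (Sum.inl i))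
          (fun i => c (Sum.inr i)) (fun i => c' (Sum.inr i)) hc hc')
      (by simp) hind (hX2 _)
    exact ⟨h1, fun i => h2 (Sum.inl i), fun j => h2 (Sum.inr j)⟩
  · rintro ⟨h1, h2, h3⟩
    have hg : ∀ k, P.map (Sum.elim X Y k) = gaussianReal 0 1 := by
      rintro (i | j)
      · exact h2 i
      · exact h3 j
    have key : ∀ (a : Fin m → ℝ) (b : Fin n → ℝ),
        (∑ i, (a i) ^ 2) + (∑ j, (b j) ^ 2) = 1 →
        Measure.map (fun ω => (∑ i, a i * X i ω) + (∑ j, b j * Y j ω)) P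
          = gaussianReal 0 1 := by
      intro a b hab
      have := ej_bwd hZ h1 hg (Sum.elim a b) (by simpa [Fintype.sum_sum_type] using hab)
      simpa [Fintype.sum_sum_type] using this
    intro a a' b b' h h'
    rw [key a b h, key a' b' h']
end

section
/- Let N ≥ 1 and let x₁,…,x_N be real numbers. Then ∫₀^{2π} |(1/N²) Σ_{j,k=1}^{N} e^{i(x_j cos α + x_k sin α)} − e^{−1/2}|² dα = 2π [ (1/N⁴) Σ_{n,j,k,l=1}^{N} J(√((x_n − x_k)² + (x_j − x_l)²)) − (2e^{−1/2}/N²) Σ_{n,j=1}^{N} J(√(x_n² + x_j²)) + e^{−1} ], where J(z) = Σ_{k=0}^{∞} (−1)^k (z²/4)^k / (k!)² is the Bessel function of the first kind of order zero. -/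
open scoped BigOperators Real

/-- The Bessel function of the first kind of order zero, defined by its everywhere-convergent
power series `J(z) = ∑_{k=0}^∞ (−1)^k (z²/4)^k / (k!)²`. -/
noncomputable def besselJ0 (z : ℝ) : ℝ :=
  ∑' k : ℕ, (-1 : ℝ) ^ k * (z ^ 2 / 4) ^ k / ((Nat.factorial k : ℝ)) ^ 2

lemma aux_integral_cos_pow (k : ℕ) :
    ∫ α in (0 : ℝ)..(2 * π), Real.cos α ^ (2 * k)
      = 2 * π * ((2 * k).factorial / (4 ^ k * (k.factorial : ℝ) ^ 2)) := by
  induction k with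
  | zero => simp
  | succ k ih =>
    rw [show 2 * (k + 1) = 2 * k + 2 by ring, integral_cos_pow, ih]
    simp only [Nat.factorial_succ, Real.sin_two_pi, Real.sin_zero]
    push_cast
    have : (k.factorial : ℝ) ≠ 0 := by positivity
    have : (k : ℝ) + 1 ≠ 0 := by positivity
    have : (2 * (k : ℝ) + 2) ≠ 0 := by positivity
    have : (2 * (k : ℝ) + 1 + 1) ≠ 0 := by positivity
    field_simp
    ring

lemma aux_integral_cos_mul_cos (r : ℝ) :
    ∫ α in (0 : ℝ)..(2 * π), Real.cos (r * Real.cos α) = 2 * π * besselJ0 r := by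
  have h := intervalIntegral.hasSum_integral_of_dominated_convergence
    (μ := MeasureTheory.volume) (a := 0) (b := 2 * π)
    (F := fun (n : ℕ) (α : ℝ) => (-1 : ℝ) ^ n * (r * Real.cos α) ^ (2 * n) / (2 * n).factorial)
    (f := fun α => Real.cos (r * Real.cos α))
    (fun n _ => |r| ^ (2 * n) / (2 * n).factorial)
    (fun n => by
      apply Continuous.aestronglyMeasurable
      fun_prop)
    (fun n => by
      refine Filter.Eventually.of_forall fun t _ => ?_
      rw [norm_div, norm_mul, norm_pow, norm_pow]
      simp only [norm_neg, norm_one, one_pow, one_mul, Real.norm_eq_abs, Nat.abs_cast]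
      refine div_le_div_of_nonneg_right (pow_le_pow_left₀ (abs_nonneg _) ?_ _) (by positivity)
      rw [abs_mul]
      exact mul_le_of_le_one_right (abs_nonneg _) (Real.abs_cos_le_one _))
    (by
      refine Filter.Eventually.of_forall fun t _ => ?_
      exact (Real.summable_pow_div_factorial |r|).comp_injective
        (i := fun n => 2 * n) (mul_right_injective₀ two_ne_zero))
    (by simp)
    (by
      refine Filter.Eventually.of_forall fun t _ => ?_
      exact Real.hasSum_cos _)
  rw [← h.tsum_eq, besselJ0, ← tsum_mul_left]
  congr 1
  ext k
  have e : ∀ α : ℝ, (-1 : ℝ) ^ k * (r * Real.cos α) ^ (2 * k) / (2 * k).factorial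
      = ((-1 : ℝ) ^ k * r ^ (2 * k) / (2 * k).factorial) * Real.cos α ^ (2 * k) := by
    intro α
    rw [mul_pow]; ring
  simp_rw [e]
  rw [intervalIntegral.integral_const_mul, aux_integral_cos_pow, div_pow, pow_mul]
  have : (k.factorial : ℝ) ≠ 0 := by positivity
  have : ((2 * k).factorial : ℝ) ≠ 0 := by positivity
  field_simp

lemma aux_key (a b : ℝ) :
    ∫ α in (0 : ℝ)..(2 * π), Real.cos (a * Real.cos α + b * Real.sin α)
      = 2 * π * besselJ0 (Real.sqrt (a ^ 2 + b ^ 2)) := by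
  set z : ℂ := ⟨a, b⟩ with hz
  have hr : Real.sqrt (a ^ 2 + b ^ 2) = ‖z‖ := by
    rw [Complex.norm_def, Complex.normSq_apply]
    simp only [hz, sq]
  have ha : a = ‖z‖ * Real.cos z.arg := (Complex.norm_mul_cos_arg z).symm
  have hb : b = ‖z‖ * Real.sin z.arg := (Complex.norm_mul_sin_arg z).symm
  have e : ∀ α : ℝ, a * Real.cos α + b * Real.sin α = ‖z‖ * Real.cos (α - z.arg) := by
    intro α
    rw [Real.cos_sub]
    linear_combination Real.cos α * ha + Real.sin α * hb
  rw [hr, ← aux_integral_cos_mul_cos]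
  simp_rw [e]
  rw [intervalIntegral.integral_comp_sub_right (fun α => Real.cos (‖z‖ * Real.cos α))]
  have hp : Function.Periodic (fun α => Real.cos (‖z‖ * Real.cos α)) (2 * π) := by
    intro t
    simp only [Real.cos_add_two_pi]
  have := hp.intervalIntegral_add_eq (0 - z.arg) 0
  rw [zero_add] at this
  rw [← this]
  congr 1
  ring

lemma aux_pointwise (N : ℕ) (x : Fin N → ℝ) (c α : ℝ) :
    ‖((1 / (N : ℂ) ^ 2) *
            (∑ j, ∑ k,
              Complex.exp (((x j * Real.cos α + x k * Real.sin α : ℝ) : ℂ) * Complex.I))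
            - (c : ℂ))‖ ^ 2
      = (1 / (N : ℝ) ^ 4) * (∑ n, ∑ j, ∑ k, ∑ l,
          Real.cos ((x n - x k) * Real.cos α + (x j - x l) * Real.sin α))
        - (2 * c / (N : ℝ) ^ 2) * (∑ n, ∑ j,
          Real.cos (x n * Real.cos α + x j * Real.sin α)) + c ^ 2 := by
  have h1 : (∑ j, ∑ k,
      Complex.exp (((x j * Real.cos α + x k * Real.sin α : ℝ) : ℂ) * Complex.I))
      = ((∑ j, ∑ k, Real.cos (x j * Real.cos α + x k * Real.sin α) : ℝ) : ℂ)
        + ((∑ j, ∑ k, Real.sin (x j * Real.cos α + x k * Real.sin α) : ℝ) : ℂ) * Complex.I := by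
    rw [Complex.ofReal_sum, Complex.ofReal_sum, Finset.sum_mul, ← Finset.sum_add_distrib]
    refine Finset.sum_congr rfl fun j _ => ?_
    rw [Complex.ofReal_sum, Complex.ofReal_sum, Finset.sum_mul, ← Finset.sum_add_distrib]
    refine Finset.sum_congr rfl fun k _ => ?_
    rw [Complex.exp_mul_I, Complex.ofReal_cos, Complex.ofReal_sin]
  have h2 : (∑ n, ∑ j, ∑ k, ∑ l,
          Real.cos ((x n - x k) * Real.cos α + (x j - x l) * Real.sin α))
      = (∑ j, ∑ k, Real.cos (x j * Real.cos α + x k * Real.sin α)) ^ 2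
        + (∑ j, ∑ k, Real.sin (x j * Real.cos α + x k * Real.sin α)) ^ 2 := by
    rw [sq, sq, Finset.sum_mul, Finset.sum_mul, ← Finset.sum_add_distrib]
    refine Finset.sum_congr rfl fun n _ => ?_
    rw [Finset.sum_mul, Finset.sum_mul, ← Finset.sum_add_distrib]
    refine Finset.sum_congr rfl fun j _ => ?_
    rw [Finset.mul_sum, Finset.mul_sum, ← Finset.sum_add_distrib]
    refine Finset.sum_congr rfl fun k _ => ?_
    rw [Finset.mul_sum, Finset.mul_sum, ← Finset.sum_add_distrib]
    refine Finset.sum_congr rfl fun l _ => ?_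
    rw [← Real.cos_sub]
    congr 1
    ring
  rw [h1, h2]
  generalize (∑ j, ∑ k, Real.cos (x j * Real.cos α + x k * Real.sin α)) = C
  generalize (∑ j, ∑ k, Real.sin (x j * Real.cos α + x k * Real.sin α)) = D
  have h3 : (1 / (N : ℂ) ^ 2) * ((C : ℂ) + (D : ℂ) * Complex.I) - (c : ℂ)
      = ((1 / (N : ℝ) ^ 2 * C - c : ℝ) : ℂ) + ((1 / (N : ℝ) ^ 2 * D : ℝ) : ℂ) * Complex.I := by
    push_cast
    ring
  rw [h3, ← Complex.normSq_eq_norm_sq, Complex.normSq_add_mul_I]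
  ring

/-- Surface-integral representation of the univariate test statistic: for real numbers
`x₁,…,x_N`,
`∫₀^{2π} |(1/N²) ∑_{j,k} e^{i(x_j cos α + x_k sin α)} − e^{−1/2}|² dα
  = 2π [ (1/N⁴) ∑_{n,j,k,l} J(√((x_n−x_k)² + (x_j−x_l)²))
         − (2e^{−1/2}/N²) ∑_{n,j} J(√(x_n² + x_j²)) + e^{−1} ]`. -/
theorem integral_sq_abs_empirical_charFun_eq_besselJ0 (N : ℕ) (hN : 1 ≤ N) (x : Fin N → ℝ) :
    (∫ α in (0 : ℝ)..(2 * π),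
        ‖((1 / (N : ℂ) ^ 2) *
            (∑ j, ∑ k,
              Complex.exp (((x j * Real.cos α + x k * Real.sin α : ℝ) : ℂ) * Complex.I))
            - ((Real.exp (-(1 : ℝ) / 2) : ℝ) : ℂ))‖ ^ 2)
      = 2 * π *
          ((1 / (N : ℝ) ^ 4) *
              (∑ n, ∑ j, ∑ k, ∑ l,
                besselJ0 (Real.sqrt ((x n - x k) ^ 2 + (x j - x l) ^ 2)))
            - (2 * Real.exp (-(1 : ℝ) / 2) / (N : ℝ) ^ 2) *
              (∑ n, ∑ j, besselJ0 (Real.sqrt ((x n) ^ 2 + (x j) ^ 2)))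
            + Real.exp (-1 : ℝ)) := by
  have hc : Real.exp (-1 : ℝ) = Real.exp (-(1 : ℝ) / 2) ^ 2 := by
    rw [← Real.exp_nat_mul]
    congr 1
    norm_num
  simp_rw [aux_pointwise]
  have i2 : ∫ α in (0 : ℝ)..(2 * π),
      (∑ n, ∑ j, Real.cos (x n * Real.cos α + x j * Real.sin α))
      = 2 * π * ∑ n, ∑ j, besselJ0 (Real.sqrt ((x n) ^ 2 + (x j) ^ 2)) := by
    rw [intervalIntegral.integral_finsetSum
      (fun _ _ => Continuous.intervalIntegrable (by fun_prop) _ _), Finset.mul_sum]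
    refine Finset.sum_congr rfl fun n _ => ?_
    rw [intervalIntegral.integral_finsetSum
      (fun _ _ => Continuous.intervalIntegrable (by fun_prop) _ _), Finset.mul_sum]
    exact Finset.sum_congr rfl fun j _ => aux_key _ _
  have i1 : ∫ α in (0 : ℝ)..(2 * π),
      (∑ n, ∑ j, ∑ k, ∑ l,
          Real.cos ((x n - x k) * Real.cos α + (x j - x l) * Real.sin α))
      = 2 * π * ∑ n, ∑ j, ∑ k, ∑ l,
          besselJ0 (Real.sqrt ((x n - x k) ^ 2 + (x j - x l) ^ 2)) := by
    rw [intervalIntegral.integral_finsetSum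
      (fun _ _ => Continuous.intervalIntegrable (by fun_prop) _ _), Finset.mul_sum]
    refine Finset.sum_congr rfl fun n _ => ?_
    rw [intervalIntegral.integral_finsetSum
      (fun _ _ => Continuous.intervalIntegrable (by fun_prop) _ _), Finset.mul_sum]
    refine Finset.sum_congr rfl fun j _ => ?_
    rw [intervalIntegral.integral_finsetSum
      (fun _ _ => Continuous.intervalIntegrable (by fun_prop) _ _), Finset.mul_sum]
    refine Finset.sum_congr rfl fun k _ => ?_
    rw [intervalIntegral.integral_finsetSum
      (fun _ _ => Continuous.intervalIntegrable (by fun_prop) _ _), Finset.mul_sum]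
    exact Finset.sum_congr rfl fun l _ => aux_key _ _
  rw [intervalIntegral.integral_add (Continuous.intervalIntegrable (by fun_prop) _ _)
      (Continuous.intervalIntegrable (by fun_prop) _ _),
    intervalIntegral.integral_sub (Continuous.intervalIntegrable (by fun_prop) _ _)
      (Continuous.intervalIntegrable (by fun_prop) _ _),
    intervalIntegral.integral_const_mul, intervalIntegral.integral_const_mul, i1, i2,
    intervalIntegral.integral_const, hc, smul_eq_mul]
  ring
end
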